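/- In the ring of formal power series over ℚ, the generating function F(X) = Σ_{n≥1} |VPF_n^↓| X^n of the numbers of non-increasing vacillating parking functions satisfies (1 − 2X − X^3) · F(X) = X + X^2; equivalently, F(X) = −(X^2 + X)/(X^3 + 2X − 1). -/

import Mathlib

/-- One car with (1-indexed) preference `p` attempts to park on a one-way street with
spots `1,…,n` under the `k`-vacillating rule, given the set `occ` of occupied spots:
it parks in spot `p` if unoccupied; otherwise in spot `p - k` if `p - k ≥ 1` and it is
unoccupied; otherwise in spot `p + k` if `p + k ≤ n` and it is unoccupied; otherwise it
fails to park (`none`). -/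
def parkStep (n k : ℕ) (occ : Finset ℕ) (p : ℕ) : Option ℕ :=
  if p ∉ occ then some p
  else if k < p ∧ p - k ∉ occ then some (p - k)
  else if p + k ≤ n ∧ p + k ∉ occ then some (p + k)
  else none

/-- Park the cars whose preference list is given, in order, under the `k`-vacillating
rule on a street with spots `1,…,n`, starting from occupied set `occ`.  Returns the list
of spots occupied by the cars (in the order the cars arrive), or `none` if some car
fails to park. -/
def parkAssign (n k : ℕ) (occ : Finset ℕ) : List ℕ → Option (List ℕ)
  | [] => some []
  | p :: ps =>
    match parkStep n k occ p with
    | none => none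
    | some s => (parkAssign n k (insert s occ) ps).map (s :: ·)

/-- The 1-indexed preference list in `[n]^m` associated to `α : Fin m → Fin n`
(car `i+1` prefers spot `α i + 1`). -/
def prefList {m n : ℕ} (α : Fin m → Fin n) : List ℕ :=
  List.ofFn fun i => (α i : ℕ) + 1

/-- The set of `k`-vacillating parking functions of length `n`:
preference lists in `[n]^n` (encoded as `Fin n → Fin n`) for which all `n` cars park. -/
def VPFk (n k : ℕ) : Finset (Fin n → Fin n) :=
  Finset.univ.filter fun α => (parkAssign n k ∅ (prefList α)).isSome

/-- The set of vacillating parking functions of length `n` (the case `k = 1`). -/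
def VPF (n : ℕ) : Finset (Fin n → Fin n) := VPFk n 1

/-- The set of non-increasing vacillating parking functions of length `n`. -/
def VPFdown (n : ℕ) : Finset (Fin n → Fin n) :=
  (VPF n).filter fun α => ∀ i j : Fin n, i ≤ j → α j ≤ α i

/-!
When exactly the spots `1, …, m + 1` are free, spot `m + 1` can only be filled by a car preferring
`m`, `m + 1` or `m + 2`, and in a non-increasing list the first car prefers the most. If it
prefers `m + 1`, or an occupied `m + 2`, it parks in spot `m + 1`. If it prefers `m`, it parks
there, and so every car must prefer `m` until spot `m + 1` is filled: the next car is diverted to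
`m - 1` and a third one to `m + 1` (if `m = 1`, already the second car goes to spot `2`). Each
time a shorter initial segment of free spots remains, which yields a linear recurrence.
-/

section Parking

variable {n k : ℕ} {occ : Finset ℕ} {p s : ℕ} {l : List ℕ}

/-- A non-increasing preference list `l` fills the street: starting from the occupied spots `occ`,
the cars park under the `k`-vacillating rule, and there are as many of them as free spots. -/
structure FillsDown (n k : ℕ) (occ : Finset ℕ) (l : List ℕ) : Prop where
  subset_Icc : occ ⊆ Finset.Icc 1 n
  card_add_length : occ.card + l.length = n
  mem_Icc : ∀ p ∈ l, p ∈ Finset.Icc 1 n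
  sortedGE : l.SortedGE
  isSome_parkAssign : (parkAssign n k occ l).isSome

theorem parkStep_of_notMem (h : p ∉ occ) : parkStep n k occ p = some p :=
  if_pos h

theorem parkStep_Ioc_eq_none {m : ℕ} (hm : m + k < p) (hp : p ≤ n) :
    parkStep n k (Finset.Ioc m n) p = none := by
  simp only [parkStep, Finset.mem_Ioc]
  rw [if_neg (by omega), if_neg (by omega), if_neg (by omega)]

theorem spec_of_parkStep_eq_some (hp : p ∈ Finset.Icc 1 n) (h : parkStep n k occ p = some s) :
    s ∉ occ ∧ s ∈ Finset.Icc 1 n ∧ s ≤ p + k := by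
  unfold parkStep at h
  grind

theorem isSome_parkAssign_cons :
    (parkAssign n k occ (p :: l)).isSome ↔
      ∃ s, parkStep n k occ p = some s ∧ (parkAssign n k (insert s occ) l).isSome := by
  rw [parkAssign]
  cases parkStep n k occ p <;> simp

theorem fillsDown_nil : FillsDown n k occ [] ↔ occ = Finset.Icc 1 n := by
  constructor
  · intro h
    exact Finset.eq_of_subset_of_card_le h.subset_Icc (by simpa using h.card_add_length.ge)
  · rintro rfl
    exact ⟨subset_rfl, by simp, by simp, List.Pairwise.nil.sortedGE, by simp [parkAssign]⟩

theorem fillsDown_cons :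
    FillsDown n k occ (p :: l) ↔ p ∈ Finset.Icc 1 n ∧ (∀ q ∈ l, q ≤ p) ∧
      ∃ s, parkStep n k occ p = some s ∧ FillsDown n k (insert s occ) l := by
  constructor
  · rintro ⟨hocc, hcard, hmem, hsort, hpark⟩
    obtain ⟨hp, hl⟩ := List.forall_mem_cons.1 hmem
    obtain ⟨hle, hsort⟩ := List.pairwise_cons.1 hsort.pairwise
    obtain ⟨s, hs, hpark⟩ := isSome_parkAssign_cons.1 hpark
    obtain ⟨hfree, hsn, -⟩ := spec_of_parkStep_eq_some hp hs
    refine ⟨hp, hle, s, hs, Finset.insert_subset hsn hocc, ?_, hl, hsort.sortedGE, hpark⟩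
    rw [Finset.card_insert_of_notMem hfree, ← hcard, List.length_cons]
    ring
  · rintro ⟨hp, hle, s, hs, hocc, hcard, hl, hsort, hpark⟩
    obtain ⟨hfree, -, -⟩ := spec_of_parkStep_eq_some hp hs
    refine ⟨(Finset.subset_insert s occ).trans hocc, ?_, List.forall_mem_cons.2 ⟨hp, hl⟩,
      (List.pairwise_cons.2 ⟨hle, hsort.pairwise⟩).sortedGE,
      isSome_parkAssign_cons.2 ⟨s, hs, hpark⟩⟩
    rw [← hcard, Finset.card_insert_of_notMem hfree, List.length_cons]
    ring

theorem FillsDown.exists_mem_le_add (h : FillsDown n k occ l) (hsn : s ∈ Finset.Icc 1 n)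
    (hs : s ∉ occ) : ∃ p ∈ l, s ≤ p + k := by
  induction l generalizing occ with
  | nil => exact absurd (fillsDown_nil.1 h ▸ hsn) hs
  | cons p l ih =>
    obtain ⟨hp, -, t, ht, h⟩ := fillsDown_cons.1 h
    by_cases hst : s = t
    · exact ⟨p, List.mem_cons_self, hst ▸ (spec_of_parkStep_eq_some hp ht).2.2⟩
    · obtain ⟨q, hq, hsq⟩ := ih h (by simp [hst, hs])
      exact ⟨q, List.mem_cons_of_mem p hq, hsq⟩

theorem FillsDown.exists_eq_cons (h : FillsDown n k occ l) (hsn : s + k ∈ Finset.Icc 1 n)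
    (hs : s + k ∉ occ) (hl : ∀ q ∈ l, q ≤ s) : ∃ l', l = s :: l' := by
  obtain ⟨p, hp, hsp⟩ := h.exists_mem_le_add hsn hs
  obtain rfl : p = s := (hl p hp).antisymm (Nat.add_le_add_iff_right.1 hsp)
  cases l with
  | nil => simp at hp
  | cons q l =>
    obtain ⟨-, hle, -⟩ := fillsDown_cons.1 h
    have hpq : p ≤ q := (List.mem_cons.1 hp).elim Eq.le (hle p)
    exact ⟨l, by rw [hpq.antisymm (hl q List.mem_cons_self)]⟩

theorem FillsDown.le_add_of_mem {m : ℕ} (h : FillsDown n k (Finset.Ioc m n) l) (hp : p ∈ l) :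
    p ≤ m + k := by
  cases l with
  | nil => simp at hp
  | cons q l =>
    obtain ⟨hq, hle, s, hs, -⟩ := fillsDown_cons.1 h
    have hqm : q ≤ m + k := by
      by_contra! hlt
      simp [parkStep_Ioc_eq_none hlt (Finset.mem_Icc.1 hq).2] at hs
    grind

end Parking

section Fillings

variable {n m : ℕ}

/-- The non-increasing lists by which cars obeying the vacillating rule fill the spots `1, …, m`
when the spots `m + 1, …, n` are occupied. -/
def fillings (n m : ℕ) : Set (List ℕ) := {l | FillsDown n 1 (Finset.Ioc m n) l}

/-- The non-increasing lists that fill the spots `1, …, m + 1` after a first car preferring spot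
`m`, which leaves the top free spot `m + 1` open.  The preference of that first car is not recorded
in the list. -/
def dips (n m : ℕ) : Set (List ℕ) := {l | FillsDown n 1 (Finset.Ioc (m + 1) n) (m :: l)}

theorem mem_fillings {l : List ℕ} :
    l ∈ fillings n m ↔ FillsDown n 1 (Finset.Ioc m n) l := Iff.rfl

theorem mem_fillings_zero {l : List ℕ} : l ∈ fillings n 0 ↔ l = [] := by
  constructor
  · intro h
    have hlen := h.card_add_length
    rw [Nat.card_Ioc] at hlen
    exact List.length_eq_zero_iff.1 (by omega)
  · rintro rfl
    exact fillsDown_nil.2 rfl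

theorem fillings_zero (n : ℕ) : fillings n 0 = {[]} :=
  Set.ext fun _ => mem_fillings_zero

theorem cons_mem_fillings_of_parkStep {p : ℕ} {l : List ℕ} (hm : m < n) (hp : p ∈ Finset.Icc 1 n)
    (hmp : m < p) (hpark : parkStep n 1 (Finset.Ioc (m + 1) n) p = some (m + 1)) :
    p :: l ∈ fillings n (m + 1) ↔ l ∈ fillings n m := by
  simp only [mem_fillings, fillsDown_cons, hpark, Option.some.injEq,
    exists_eq_left', Finset.insert_Ioc_add_one_left_eq_Ioc hm, hp, true_and]
  exact and_iff_right_of_imp fun h q hq => (h.le_add_of_mem hq).trans hmp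

theorem succ_cons_mem_fillings {l : List ℕ} (hm : m < n) :
    (m + 1) :: l ∈ fillings n (m + 1) ↔ l ∈ fillings n m :=
  cons_mem_fillings_of_parkStep hm (Finset.mem_Icc.2 ⟨by omega, hm⟩) m.lt_succ_self
    (parkStep_of_notMem (by simp))

theorem add_two_cons_mem_fillings {l : List ℕ} (hm : m + 1 < n) :
    (m + 2) :: l ∈ fillings n (m + 1) ↔ l ∈ fillings n m :=
  cons_mem_fillings_of_parkStep (by omega) (Finset.mem_Icc.2 ⟨by omega, hm⟩) (by omega)
    (by simp [parkStep, Nat.succ_le_of_lt hm])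

theorem bounds_of_cons_mem_fillings {p : ℕ} {l : List ℕ} (hm : m < n)
    (h : p :: l ∈ fillings n (m + 1)) : m ≤ p ∧ p ≤ m + 2 ∧ p ≤ n := by
  obtain ⟨q, hq, hmq⟩ := h.exists_mem_le_add (Finset.mem_Icc.2 ⟨m.succ_pos, hm⟩) (by simp)
  obtain ⟨hp, hle, -⟩ := fillsDown_cons.1 h
  have hpm := h.le_add_of_mem List.mem_cons_self
  grind

theorem nil_notMem_fillings_succ (hm : m < n) : [] ∉ fillings n (m + 1) := by
  intro h
  have hlen := h.card_add_length
  rw [Nat.card_Ioc, List.length_nil] at hlen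
  omega

theorem fillings_succ (hm : m + 1 < n) :
    fillings n (m + 1) =
      List.cons (m + 2) '' fillings n m ∪ List.cons (m + 1) '' fillings n m ∪
        List.cons m '' dips n m := by
  ext l
  cases l with
  | nil => simp [nil_notMem_fillings_succ (show m < n by omega)]
  | cons p l =>
    have hdip : m :: l ∈ fillings n (m + 1) ↔ l ∈ dips n m := Iff.rfl
    have htop := succ_cons_mem_fillings (l := l) (show m < n by omega)
    have habove := add_two_cons_mem_fillings (l := l) hm
    have hbounds := bounds_of_cons_mem_fillings (p := p) (l := l) (show m < n by omega)
    simp only [Set.mem_union, Set.mem_image, List.cons.injEq, exists_eq_right_right]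
    grind

theorem fillings_succ_self (m : ℕ) :
    fillings (m + 1) (m + 1) =
      List.cons (m + 1) '' fillings (m + 1) m ∪ List.cons m '' dips (m + 1) m := by
  ext l
  cases l with
  | nil => simp [nil_notMem_fillings_succ m.lt_succ_self]
  | cons p l =>
    have hdip : m :: l ∈ fillings (m + 1) (m + 1) ↔ l ∈ dips (m + 1) m := Iff.rfl
    have htop := succ_cons_mem_fillings (l := l) m.lt_succ_self
    have hbounds := bounds_of_cons_mem_fillings (p := p) (l := l) m.lt_succ_self
    simp only [Set.mem_union, Set.mem_image, List.cons.injEq, exists_eq_right_right]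
    grind

theorem dips_zero (n : ℕ) : dips n 0 = ∅ := by
  ext l
  simp [dips, fillsDown_cons]

theorem mem_dips {l : List ℕ} (hm : 1 ≤ m) (hmn : m < n) :
    l ∈ dips n m ↔
      (∀ q ∈ l, q ≤ m) ∧ FillsDown n 1 (insert m (Finset.Ioc (m + 1) n)) l := by
  have hpark : parkStep n 1 (Finset.Ioc (m + 1) n) m = some m := parkStep_of_notMem (by simp)
  simp [dips, fillsDown_cons, hpark, hm, hmn.le]

theorem exists_eq_cons_of_mem_dips {l : List ℕ} (hm : 1 ≤ m) (hmn : m < n) (h : l ∈ dips n m) :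
    ∃ l', l = m :: l' := by
  obtain ⟨hle, h⟩ := (mem_dips hm hmn).1 h
  exact h.exists_eq_cons (Finset.mem_Icc.2 ⟨by omega, hmn⟩) (by simp) hle

theorem one_cons_mem_dips_one {l : List ℕ} (hn : 1 < n) : 1 :: l ∈ dips n 1 ↔ l = [] := by
  have hpark : parkStep n 1 (insert 1 (Finset.Ioc 2 n)) 1 = some 2 := by
    simp [parkStep, Nat.succ_le_of_lt hn]
  have hfull : insert 2 (insert 1 (Finset.Ioc 2 n)) = Finset.Ioc 0 n := by
    ext x
    simp only [Finset.mem_insert, Finset.mem_Ioc]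
    omega
  rw [mem_dips le_rfl hn, fillsDown_cons]
  simp only [hpark, Option.some.injEq, exists_eq_left', hfull, ← mem_fillings,
    mem_fillings_zero]
  grind

theorem dips_one (hn : 1 < n) : dips n 1 = {[1]} := by
  ext l
  constructor
  · intro h
    obtain ⟨l, rfl⟩ := exists_eq_cons_of_mem_dips le_rfl hn h
    simpa using (one_cons_mem_dips_one hn).1 h
  · rintro rfl
    exact (one_cons_mem_dips_one hn).2 rfl

theorem cons_mem_dips_add_two {l : List ℕ} (hm : m + 2 < n) :
    (m + 2) :: l ∈ dips n (m + 2) ↔ (∀ q ∈ l, q ≤ m + 2) ∧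
      FillsDown n 1 (insert (m + 1) (insert (m + 2) (Finset.Ioc (m + 3) n))) l := by
  have hpark :
      parkStep n 1 (insert (m + 2) (Finset.Ioc (m + 3) n)) (m + 2) = some (m + 1) := by
    simp [parkStep]
  rw [mem_dips (by omega) hm, fillsDown_cons]
  simp only [hpark, Option.some.injEq, exists_eq_left']
  grind

theorem cons_cons_mem_dips_add_two {l : List ℕ} (hm : m + 2 < n) :
    (m + 2) :: (m + 2) :: l ∈ dips n (m + 2) ↔ l ∈ fillings n m := by
  have hpark : parkStep n 1 (insert (m + 1) (insert (m + 2) (Finset.Ioc (m + 3) n))) (m + 2) =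
      some (m + 3) := by
    simp [parkStep, Nat.succ_le_of_lt hm]
  have hocc : insert (m + 3) (insert (m + 1) (insert (m + 2) (Finset.Ioc (m + 3) n))) =
      Finset.Ioc m n := by
    ext x
    simp only [Finset.mem_insert, Finset.mem_Ioc]
    omega
  have hle (h : l ∈ fillings n m) : ∀ q ∈ l, q ≤ m + 1 := fun _ => h.le_add_of_mem
  rw [cons_mem_dips_add_two hm, fillsDown_cons]
  simp only [hpark, Option.some.injEq, exists_eq_left', hocc, ← mem_fillings]
  grind

theorem exists_eq_cons_cons_of_mem_dips {l : List ℕ} (hm : m + 2 < n) (h : l ∈ dips n (m + 2)) :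
    ∃ l', l = (m + 2) :: (m + 2) :: l' := by
  obtain ⟨l, rfl⟩ := exists_eq_cons_of_mem_dips (by omega) hm h
  obtain ⟨hle, h⟩ := (cons_mem_dips_add_two hm).1 h
  obtain ⟨l, rfl⟩ := h.exists_eq_cons (Finset.mem_Icc.2 ⟨by omega, hm⟩) (by simp) hle
  exact ⟨l, rfl⟩

theorem dips_add_two (hm : m + 2 < n) :
    dips n (m + 2) = List.cons (m + 2) '' (List.cons (m + 2) '' fillings n m) := by
  ext l
  constructor
  · intro h
    obtain ⟨l, rfl⟩ := exists_eq_cons_cons_of_mem_dips hm h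
    exact Set.mem_image_of_mem _
      (Set.mem_image_of_mem _ ((cons_cons_mem_dips_add_two hm).1 h))
  · rintro ⟨_, ⟨l, hl, rfl⟩, rfl⟩
    exact (cons_cons_mem_dips_add_two hm).2 hl

end Fillings

section Counting

theorem disjoint_image_cons {α : Type*} {a b : α} (hab : a ≠ b) (s t : Set (List α)) :
    Disjoint (List.cons a '' s) (List.cons b '' t) := by
  rw [Set.disjoint_left]
  rintro _ ⟨x, -, rfl⟩ ⟨y, -, hy⟩
  exact hab (List.cons.inj hy).1.symm

theorem encard_image_cons {α : Type*} (a : α) (s : Set (List α)) :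
    (List.cons a '' s).encard = s.encard :=
  List.cons_injective.encard_image s

mutual

/-- The number of `fillings n m`, which is independent of `n > m`. -/
def fillingCount : ℕ → ℕ
  | 0 => 1
  | m + 1 => 2 * fillingCount m + dipCount m

/-- The number of `dips n m`, which is independent of `n > m`. -/
def dipCount : ℕ → ℕ
  | 0 => 0
  | 1 => 1
  | m + 2 => fillingCount m

end

mutual

theorem encard_fillings {n : ℕ} : ∀ {m : ℕ}, m < n → (fillings n m).encard = fillingCount m
  | 0, _ => by simp [fillings_zero, fillingCount]
  | m + 1, hm => by
    rw [fillings_succ hm, Set.encard_union_eq, Set.encard_union_eq, encard_image_cons,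
      encard_image_cons, encard_image_cons, encard_fillings (by omega), encard_dips (by omega),
      fillingCount, ← two_mul]
    · norm_cast
    · exact disjoint_image_cons (by omega) _ _
    · rw [Set.disjoint_union_left]
      exact ⟨disjoint_image_cons (by omega) _ _, disjoint_image_cons (by omega) _ _⟩

theorem encard_dips {n : ℕ} : ∀ {m : ℕ}, m < n → (dips n m).encard = dipCount m
  | 0, _ => by simp [dips_zero, dipCount]
  | 1, hn => by simp [dips_one hn, dipCount]
  | m + 2, hm => by
    rw [dips_add_two hm, encard_image_cons, encard_image_cons, encard_fillings (by omega),
      dipCount]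

end

theorem prefList_injective {m n : ℕ} :
    Function.Injective (prefList : (Fin m → Fin n) → List ℕ) := by
  intro α β h
  funext i
  simpa [Fin.ext_iff] using congrFun (List.ofFn_injective h) i

theorem exists_prefList_eq {n : ℕ} {l : List ℕ} (hl : ∀ p ∈ l, p ∈ Finset.Icc 1 n) :
    ∃ α : Fin l.length → Fin n, prefList α = l := by
  have hbounds (i : Fin l.length) : 1 ≤ l.get i ∧ l.get i ≤ n :=
    Finset.mem_Icc.1 (hl _ (l.get_mem i))
  refine ⟨fun i => ⟨l.get i - 1, by have := hbounds i; omega⟩, ?_⟩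
  calc prefList _ = List.ofFn l.get :=
        congrArg List.ofFn (funext fun i => Nat.sub_add_cancel (hbounds i).1)
    _ = l := List.ofFn_get l

theorem mem_VPFdown_iff {n : ℕ} {α : Fin n → Fin n} :
    α ∈ VPFdown n ↔ prefList α ∈ fillings n n := by
  have hsort : (prefList α).SortedGE ↔ Antitone α := by
    simp [prefList, Antitone]
  have hmem : ∀ p ∈ prefList α, p ∈ Finset.Icc 1 n := by
    simp only [prefList, List.forall_mem_ofFn_iff, Finset.mem_Icc]
    omega
  simp only [VPFdown, VPF, VPFk, Finset.mem_filter, Finset.mem_univ, true_and,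
    mem_fillings, Finset.Ioc_self]
  constructor
  · rintro ⟨hpark, hα⟩
    exact ⟨by simp, by simp [prefList], hmem, hsort.2 fun i j => hα i j, hpark⟩
  · intro h
    exact ⟨h.isSome_parkAssign, fun i j hij => hsort.1 h.sortedGE hij⟩

theorem prefList_image_VPFdown (n : ℕ) : prefList '' (VPFdown n : Set (Fin n → Fin n)) =
    fillings n n := by
  ext l
  constructor
  · rintro ⟨α, hα, rfl⟩
    exact mem_VPFdown_iff.1 hα
  · intro h
    obtain rfl : l.length = n := by simpa using h.card_add_length
    obtain ⟨α, hα⟩ := exists_prefList_eq h.mem_Icc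
    exact ⟨α, mem_VPFdown_iff.2 (by rwa [hα]), hα⟩

theorem card_VPFdown_succ (n : ℕ) :
    (VPFdown (n + 1)).card = fillingCount n + dipCount n := by
  have hcard : ((VPFdown (n + 1)).card : ℕ∞) = (fillings (n + 1) (n + 1)).encard := by
    rw [← prefList_image_VPFdown, prefList_injective.encard_image,
      Set.encard_coe_eq_coe_finsetCard]
  rw [fillings_succ_self, Set.encard_union_eq (disjoint_image_cons (by omega) _ _),
    encard_image_cons, encard_image_cons, encard_fillings n.lt_succ_self,
    encard_dips n.lt_succ_self] at hcard
  exact_mod_cast hcard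

end Counting

section GeneratingFunctions

open PowerSeries

/-- The generating function of `fillingCount`. -/
noncomputable def fillingSeries : ℚ⟦X⟧ := .mk fun m => (fillingCount m : ℚ)

/-- The generating function of `dipCount`. -/
noncomputable def dipSeries : ℚ⟦X⟧ := .mk fun m => (dipCount m : ℚ)

theorem fillingSeries_eq : fillingSeries = 1 + X * (2 * fillingSeries + dipSeries) := by
  rw [two_mul]
  ext (_ | m)
  · simp [fillingSeries, fillingCount]
  · simp [fillingSeries, dipSeries, fillingCount, coeff_succ_X_mul, coeff_one, two_mul]

theorem dipSeries_eq : dipSeries = X + X ^ 2 * fillingSeries := by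
  ext (_ | _ | m)
  · simp [dipSeries, dipCount]
  · simp [dipSeries, dipCount, coeff_X_pow_mul']
  · simp [dipSeries, fillingSeries, dipCount, coeff_X_pow_mul', coeff_X]

theorem mk_card_VPFdown :
    PowerSeries.mk (fun n => if n = 0 then (0 : ℚ) else ((VPFdown n).card : ℚ)) =
      X * (fillingSeries + dipSeries) := by
  ext (_ | n)
  · simp
  · simp [fillingSeries, dipSeries, coeff_succ_X_mul, card_VPFdown_succ]

end GeneratingFunctions

/-- In `ℚ⟦X⟧`, the generating function
`F(X) = ∑_{n ≥ 1} |VPF_n^↓| Xⁿ` satisfies `(1 − 2X − X³)·F(X) = X + X²`. -/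
theorem vpfdown_generating_function :
    (1 - 2 * PowerSeries.X - PowerSeries.X ^ 3) *
        PowerSeries.mk (fun n => if n = 0 then (0 : ℚ) else ((VPFdown n).card : ℚ)) =
      PowerSeries.X + PowerSeries.X ^ 2 := by
  rw [mk_card_VPFdown]
  linear_combination (PowerSeries.X + PowerSeries.X ^ 3) * fillingSeries_eq +
    (PowerSeries.X - PowerSeries.X ^ 2) * dipSeries_eq
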